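/- arXiv:2007.12576 — 2 statements merged into one kernel-verified Lean document; each statement's English description precedes it below -/
import Mathlib

section
/- Let β ∈ (0,1), let A and B be positive semidefinite n×n complex matrices with A positive definite, and let Φ be a positive linear map from n×n complex matrices to m×m complex matrices (i.e., Φ maps positive semidefinite matrices to positive semidefinite matrices) such that Φ(A) is positive definite. Then Φ(A #_β B) ≤ Φ(A) #_β Φ(B) in the Loewner order. -/
open Matrix Filter
open scoped Kronecker Classical ComplexOrder

noncomputable def Matrix.rpowH {n : Type*} [Fintype n] [DecidableEq n]
    (A : Matrix n n ℂ) (r : ℝ) : Matrix n n ℂ :=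
  if hA : A.IsHermitian then
    (hA.eigenvectorUnitary : Matrix n n ℂ) *
      Matrix.diagonal (fun i => ((hA.eigenvalues i ^ r : ℝ) : ℂ)) *
      star (hA.eigenvectorUnitary : Matrix n n ℂ)
  else 0

noncomputable def Matrix.gmean {n : Type*} [Fintype n] [DecidableEq n]
    (β : ℝ) (S A : Matrix n n ℂ) : Matrix n n ℂ :=
  S.rpowH (1/2) * ((S.rpowH (-(1/2)) * A * S.rpowH (-(1/2))).rpowH β) * S.rpowH (1/2)

noncomputable def QSharp {n : Type*} [Fintype n] [DecidableEq n]
    (α : ℝ) (ρ σ : Matrix n n ℂ) : ℝ :=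
  sInf { t : ℝ | ∃ A : Matrix n n ℂ, A.PosSemidef ∧
    (Matrix.gmean (1/α) σ A - ρ).PosSemidef ∧ t = A.trace.re }

noncomputable def DSharp {n : Type*} [Fintype n] [DecidableEq n]
    (α : ℝ) (ρ σ : Matrix n n ℂ) : ℝ :=
  1/(α-1) * Real.logb 2 (QSharp α ρ σ)

noncomputable def opNorm {n : Type*} [Fintype n] [DecidableEq n] (A : Matrix n n ℂ) : ℝ :=
  ‖(Matrix.toEuclideanCLM (𝕜 := ℂ) A : EuclideanSpace ℂ n →L[ℂ] EuclideanSpace ℂ n)‖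

noncomputable def Dtilde {n : Type*} [Fintype n] [DecidableEq n]
    (α : ℝ) (ρ σ : Matrix n n ℂ) : ℝ :=
  1/(α-1) * Real.logb 2
    (((σ.rpowH ((1-α)/(2*α)) * ρ * σ.rpowH ((1-α)/(2*α))).rpowH α).trace.re)

noncomputable def Dhat {n : Type*} [Fintype n] [DecidableEq n]
    (α : ℝ) (ρ σ : Matrix n n ℂ) : ℝ :=
  1/(α-1) * Real.logb 2
    ((σ.rpowH (1/2) * ((σ.rpowH (-(1/2)) * ρ * σ.rpowH (-(1/2))).rpowH α) * σ.rpowH (1/2)).trace.re)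

/-!
Conjugating by the square roots of `a` and `Φ a` reduces the claim to `Ψ (c ^ β) ≤ Ψ c ^ β` for a
unital positive map `Ψ`. Since `t ^ β` is an integral of resolvents, this follows from Choi's
inequality `Φ 1 * (Φ x)⁻¹ * Φ 1 ≤ Φ x⁻¹`, which is the Kadison–Schwarz inequality in the form
`r⋆ * Φ a + Φ a * r ≤ Φ (a ^ 2) + r⋆ * Φ 1 * r`, applied to `y ↦ Φ (√x * y * √x)` at `a = x⁻¹` and
`r = (Φ x)⁻¹ * Φ 1`. The latter inequality is invariant under affine changes of `a` and `r`, so one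
may take `0 ≤ a ≤ 1`. Then the Bernstein polynomials `bₖ = bernsteinPolynomial ℝ n k` give a
partition of unity `bₖ(a)` into positive elements with mean `∑ k/n • bₖ(a) = a` and second moment
`a ^ 2 + (a - a ^ 2) / n`, so expanding `0 ≤ ∑ (k/n - r)⋆ * Φ (bₖ(a)) * (k/n - r)` and letting
`n → ∞` gives the claim.
-/

section Bernstein
open Polynomial

lemma sum_bernsteinPolynomial_node_smul {n : ℕ} (hn : n ≠ 0) :
    ∑ k ∈ Finset.range (n + 1), (k / n : ℝ) • bernsteinPolynomial ℝ n k = X := by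
  have h := bernsteinPolynomial.sum_smul ℝ n
  simp only [← Nat.cast_smul_eq_nsmul ℝ] at h
  simp only [div_eq_inv_mul, mul_smul, ← Finset.smul_sum, h]
  exact inv_smul_smul₀ (mod_cast hn) X

lemma sum_bernsteinPolynomial_node_sq_smul {n : ℕ} (hn : n ≠ 0) :
    ∑ k ∈ Finset.range (n + 1), (k / n : ℝ) ^ 2 • bernsteinPolynomial ℝ n k =
      X ^ 2 + (n : ℝ)⁻¹ • (X - X ^ 2) := by
  have hn' : (n : ℝ) ≠ 0 := mod_cast hn
  have first := bernsteinPolynomial.sum_smul ℝ n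
  have second := bernsteinPolynomial.sum_mul_smul ℝ n
  simp only [← Nat.cast_smul_eq_nsmul ℝ] at first second
  have sq_eq (k : ℕ) : (k : ℝ) ^ 2 = (k * (k - 1) : ℕ) + k := by
    cases k with
    | zero => simp
    | succ k => push_cast [Nat.add_sub_cancel]; ring
  have node_sq (k : ℕ) : (k / n : ℝ) ^ 2 = ((n : ℝ)⁻¹) ^ 2 * ((k * (k - 1) : ℕ) + k) := by
    rw [← sq_eq]; ring
  simp only [node_sq, mul_smul, add_smul, ← Finset.smul_sum, Finset.sum_add_distrib, first, second]
  rw [← sub_eq_of_eq_add (sq_eq n)]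
  match_scalars <;> field_simp
  ring

end Bernstein

lemma star_mul_sum_smul_add_le {A ι : Type*} [Ring A] [StarRing A] [PartialOrder A]
    [StarOrderedRing A] [Algebra ℝ A] [StarModule ℝ A] (s : Finset ι) (c : ι → ℝ) {E : ι → A}
    (hE : ∀ i ∈ s, 0 ≤ E i) (r : A) :
    star r * ∑ i ∈ s, c i • E i + (∑ i ∈ s, c i • E i) * r ≤
      ∑ i ∈ s, c i ^ 2 • E i + star r * (∑ i ∈ s, E i) * r := by
  have expand (i : ι) : star (c i • 1 - r) * E i * (c i • 1 - r) =
      c i ^ 2 • E i + star r * E i * r - (star r * (c i • E i) + (c i • E i) * r) := by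
    simp only [star_sub, star_smul, star_trivial, star_one, sub_mul, mul_sub, smul_mul_assoc,
      mul_smul_comm, one_mul, mul_one]
    module
  have h := Finset.sum_nonneg fun i hi ↦ star_left_conjugate_nonneg (hE i hi) (c i • 1 - r)
  simpa only [expand, Finset.sum_sub_distrib, Finset.sum_add_distrib, ← Finset.mul_sum,
    ← Finset.sum_mul, sub_nonneg] using h

section CStarAlgebra
open scoped Topology Ring

variable {𝒜 ℬ : Type*} [CStarAlgebra 𝒜] [PartialOrder 𝒜] [StarOrderedRing 𝒜]
  [CStarAlgebra ℬ] [PartialOrder ℬ] [StarOrderedRing ℬ]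

open Polynomial in
lemma aeval_bernsteinPolynomial_nonneg {a : 𝒜} (ha₀ : 0 ≤ a) (ha₁ : a ≤ 1) (n k : ℕ) :
    0 ≤ aeval a (bernsteinPolynomial ℝ n k) := by
  rw [← cfc_polynomial (bernsteinPolynomial ℝ n k) a]
  refine cfc_nonneg fun x hx ↦ ?_
  have hx₀ : 0 ≤ x := spectrum_nonneg_of_nonneg ha₀ hx
  have hx₁ : 0 ≤ 1 - x := sub_nonneg.2 ((CFC.le_one_iff a).1 ha₁ x hx)
  simp only [bernsteinPolynomial, eval_mul, eval_pow, eval_X, eval_sub, eval_one, eval_natCast]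
  positivity

open Polynomial in
lemma star_mul_map_add_map_mul_le_add_inv_smul (Φ : 𝒜 →ₚ[ℂ] ℬ) {a : 𝒜} (ha₀ : 0 ≤ a)
    (ha₁ : a ≤ 1) (r : ℬ) {n : ℕ} (hn : n ≠ 0) :
    star r * Φ a + Φ a * r ≤ Φ (a ^ 2) + (n : ℝ)⁻¹ • Φ (a - a ^ 2) + star r * Φ 1 * r := by
  let L : ℝ[X] →ₗ[ℝ] ℬ := Φ.toLinearMap.restrictScalars ℝ ∘ₗ (aeval a).toLinearMap
  have hL (k : ℕ) : 0 ≤ L (bernsteinPolynomial ℝ n k) :=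
    Φ.map_nonneg (aeval_bernsteinPolynomial_nonneg ha₀ ha₁ n k)
  have h := star_mul_sum_smul_add_le (Finset.range (n + 1)) (fun k ↦ (k / n : ℝ))
    (fun k _ ↦ hL k) r
  simp only [← map_smul, ← map_sum, sum_bernsteinPolynomial_node_smul hn,
    sum_bernsteinPolynomial_node_sq_smul hn, bernsteinPolynomial.sum] at h
  simpa [L] using h

lemma star_mul_map_add_map_mul_le_of_le_one (Φ : 𝒜 →ₚ[ℂ] ℬ) {a : 𝒜} (ha₀ : 0 ≤ a) (ha₁ : a ≤ 1)
    (r : ℬ) : star r * Φ a + Φ a * r ≤ Φ (a ^ 2) + star r * Φ 1 * r := by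
  have lim : Tendsto (fun n : ℕ ↦ Φ (a ^ 2) + (n : ℝ)⁻¹ • Φ (a - a ^ 2) + star r * Φ 1 * r) atTop
      (𝓝 (Φ (a ^ 2) + star r * Φ 1 * r)) := by
    have := (tendsto_inv_atTop_nhds_zero_nat (𝕜 := ℝ)).smul_const (Φ (a - a ^ 2))
    simpa only [zero_smul, add_zero] using (this.const_add (Φ (a ^ 2))).add_const (star r * Φ 1 * r)
  exact ge_of_tendsto lim <| (eventually_ne_atTop 0).mono fun _ hn ↦
    star_mul_map_add_map_mul_le_add_inv_smul Φ ha₀ ha₁ r hn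

lemma exists_nonneg_add_smul_one_le_smul_one {a : 𝒜} (ha : IsSelfAdjoint a) :
    ∃ s t : ℝ, 0 < t ∧ 0 ≤ a + s • (1 : 𝒜) ∧ a + s • (1 : 𝒜) ≤ t • 1 := by
  have lower := ha.neg_algebraMap_norm_le_self
  have upper := ha.le_algebraMap_norm_self
  simp only [Algebra.algebraMap_eq_smul_one] at lower upper
  refine ⟨‖a‖, 2 * ‖a‖ + 1, by positivity, neg_le_iff_add_nonneg.1 lower, ?_⟩
  calc a + ‖a‖ • 1 ≤ ‖a‖ • 1 + ‖a‖ • 1 := by gcongr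
    _ = (2 * ‖a‖) • 1 := by module
    _ ≤ (2 * ‖a‖ + 1) • 1 := smul_le_smul_of_nonneg_right (by linarith) zero_le_one

lemma star_mul_map_add_map_mul_le (Φ : 𝒜 →ₚ[ℂ] ℬ) {a : 𝒜} (ha : IsSelfAdjoint a) (r : ℬ) :
    star r * Φ a + Φ a * r ≤ Φ (a ^ 2) + star r * Φ 1 * r := by
  obtain ⟨s, t, ht, has, hat⟩ := exists_nonneg_add_smul_one_le_smul_one ha
  have h := star_mul_map_add_map_mul_le_of_le_one Φ (a := t⁻¹ • (a + s • 1))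
    (smul_nonneg (by positivity) has) ((inv_smul_le_iff_of_pos ht).2 hat) (t⁻¹ • (r + s • 1))
  simp only [smul_pow, PositiveLinearMap.map_smul_of_tower, star_smul, star_trivial,
    smul_mul_assoc, mul_smul_comm, smul_smul, ← smul_add, ← pow_two] at h
  replace h := sub_nonneg.2 ((smul_le_smul_iff_of_pos_left (by positivity)).1 h)
  have cancel : Φ ((a + s • 1) ^ 2) + star (r + s • 1) * Φ 1 * (r + s • 1) -
      (star (r + s • 1) * Φ (a + s • 1) + Φ (a + s • 1) * (r + s • 1)) =
      Φ (a ^ 2) + star r * Φ 1 * r - (star r * Φ a + Φ a * r) := by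
    simp only [pow_two, star_add, star_smul, star_trivial, star_one, add_mul, mul_add, map_add,
      PositiveLinearMap.map_smul_of_tower, smul_mul_assoc, mul_smul_comm, one_mul, mul_one]
    module
  exact sub_nonneg.1 (cancel ▸ h)

/-- Conjugation `x ↦ √a * x * √a` as a `ℂ`-linear positive map, so that it composes with other
positive maps; `CFC.conjSqrt` is bundled only as an `ℝ`-linear map. -/
noncomputable def conjSqrtPositiveMap (a : 𝒜) : 𝒜 →ₚ[ℂ] 𝒜 where
  toLinearMap := .mulLeftRight ℂ (CFC.sqrt a, CFC.sqrt a)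
  monotone' := CFC.conjSqrt_monotone (c := a)

lemma conjSqrt_self_ringInverse {a : 𝒜} (ha : IsStrictlyPositive a) :
    CFC.conjSqrt a a⁻¹ʳ = 1 := by
  simpa only [CFC.conjSqrt_one a⁻¹ʳ ha.ringInverse.nonneg] using
    CFC.conjSqrt_conjSqrt_ringInverse a 1

lemma conjSqrt_self {a : 𝒜} (ha : 0 ≤ a) : CFC.conjSqrt a a = a ^ 2 :=
  calc CFC.conjSqrt a a = CFC.sqrt a * (CFC.sqrt a * CFC.sqrt a) * CFC.sqrt a := by
        rw [CFC.sqrt_mul_sqrt_self a, CFC.conjSqrt_apply]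
    _ = (CFC.sqrt a * CFC.sqrt a) ^ 2 := by noncomm_ring
    _ = a ^ 2 := by rw [CFC.sqrt_mul_sqrt_self a]

lemma conjSqrt_ringInverse_sq {a : 𝒜} (ha : IsStrictlyPositive a) :
    CFC.conjSqrt a (a⁻¹ʳ ^ 2) = a⁻¹ʳ := by
  rw [← conjSqrt_self ha.ringInverse.nonneg, CFC.conjSqrt_conjSqrt_ringInverse a]

lemma map_one_mul_ringInverse_map_mul_map_one_le (Φ : 𝒜 →ₚ[ℂ] ℬ) {a : 𝒜}
    (ha : IsStrictlyPositive a) (hΦa : IsStrictlyPositive (Φ a)) :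
    Φ 1 * (Φ a)⁻¹ʳ * Φ 1 ≤ Φ a⁻¹ʳ := by
  have hΦ1 : IsSelfAdjoint (Φ 1) := .of_nonneg (Φ.map_nonneg zero_le_one)
  have hinv : IsSelfAdjoint (Φ a)⁻¹ʳ := .of_nonneg hΦa.ringInverse.nonneg
  have h := star_mul_map_add_map_mul_le (Φ.comp (conjSqrtPositiveMap a))
    (.of_nonneg ha.ringInverse.nonneg) ((Φ a)⁻¹ʳ * Φ 1)
  have comp_apply (x : 𝒜) : Φ.comp (conjSqrtPositiveMap a) x = Φ (CFC.conjSqrt a x) := rfl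
  simp only [comp_apply, CFC.conjSqrt_one a, conjSqrt_self_ringInverse ha,
    conjSqrt_ringInverse_sq ha, star_mul, hΦ1.star_eq, hinv.star_eq, ← mul_assoc,
    Ring.inverse_mul_cancel_right _ _ hΦa.isUnit] at h
  exact le_of_add_le_add_right h

open Real in
lemma cfc_rpowIntegrand₀₁_eq_sub_ringInverse {p t : ℝ} (hp : p ≠ 1) (ht : 0 < t) {x : 𝒜}
    (hx : 0 ≤ x) : cfc (rpowIntegrand₀₁ p t) x =
      algebraMap ℝ 𝒜 (t ^ (p - 1)) - t ^ p • (algebraMap ℝ 𝒜 t + x)⁻¹ʳ := by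
  have hspectrum : ∀ r ∈ spectrum ℝ x, t + r ≠ 0 := by grind
  have hg : ContinuousOn (fun z : ℝ ↦ (t + z)⁻¹) (spectrum ℝ x) := by
    fun_prop (disch := grind -abstractProof)
  have sub := cfc_sub (fun _ : ℝ ↦ t ^ (p - 1)) (fun z : ℝ ↦ t ^ p * (t + z)⁻¹) x
    (hg := hg.const_mul (t ^ p))
  rw [rpowIntegrand₀₁_eq_sub hp ht, sub, cfc_const .., cfc_const_mul _ _ _ hg,
    cfc_inv _ _ hspectrum .., cfc_const_add .., cfc_id' ..]

lemma map_cfc_rpowIntegrand₀₁_le (Φ : 𝒜 →ₚ[ℂ] ℬ) (hΦ : Φ 1 = 1) {p t : ℝ} (hp : p ≠ 1) (ht : 0 < t)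
    {a : 𝒜} (ha : 0 ≤ a) :
    Φ (cfc (Real.rpowIntegrand₀₁ p t) a) ≤ cfc (Real.rpowIntegrand₀₁ p t) (Φ a) := by
  have map_algebraMap (s : ℝ) : Φ (algebraMap ℝ 𝒜 s) = algebraMap ℝ ℬ s := by
    rw [Algebra.algebraMap_eq_smul_one, Algebra.algebraMap_eq_smul_one,
      PositiveLinearMap.map_smul_of_tower, hΦ]
  have hΦa : 0 ≤ Φ a := Φ.map_nonneg ha
  have h : (algebraMap ℝ ℬ t + Φ a)⁻¹ʳ ≤ Φ (algebraMap ℝ 𝒜 t + a)⁻¹ʳ := by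
    simpa only [hΦ, one_mul, mul_one, map_add, map_algebraMap] using
      map_one_mul_ringInverse_map_mul_map_one_le Φ (a := algebraMap ℝ 𝒜 t + a) (by grind)
        (by rw [map_add, map_algebraMap]; grind)
  rw [cfc_rpowIntegrand₀₁_eq_sub_ringInverse hp ht ha,
    cfc_rpowIntegrand₀₁_eq_sub_ringInverse hp ht hΦa, map_sub, map_algebraMap,
    PositiveLinearMap.map_smul_of_tower]
  gcongr

open Set Real in
lemma cfcₙ_rpowIntegrand₀₁_prod {p t : ℝ} (hp : p ∈ Ioo 0 1) (ht : 0 < t) {a : 𝒜} {b : ℬ}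
    (ha : 0 ≤ a) (hb : 0 ≤ b) :
    cfcₙ (rpowIntegrand₀₁ p t) (a, b) =
      (cfc (rpowIntegrand₀₁ p t) a, cfc (rpowIntegrand₀₁ p t) b) := by
  have continuousOn_union :
      ContinuousOn (rpowIntegrand₀₁ p t) (quasispectrum ℝ a ∪ quasispectrum ℝ b) :=
    (continuousOn_rpowIntegrand₀₁_Ici hp ht).mono (by grind)
  rw [cfcₙ_map_prod (S := ℝ) _ a b continuousOn_union (.of_nonneg (Prod.le_def.2 ⟨ha, hb⟩)),
    cfcₙ_eq_cfc (continuousOn_union.mono subset_union_left),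
    cfcₙ_eq_cfc (continuousOn_union.mono subset_union_right)]

open Set MeasureTheory Real in
variable (𝒜 ℬ) in
-- The representation in `𝒜 × ℬ` is what makes a single measure serve both algebras.
lemma exists_measure_rpow_eq_integral_cfc_rpowIntegrand₀₁ {p : ℝ} (hp : p ∈ Ioo 0 1) :
    ∃ μ : Measure ℝ, ∀ (a : 𝒜) (b : ℬ), 0 ≤ a → 0 ≤ b →
      (IntegrableOn (fun t ↦ cfc (rpowIntegrand₀₁ p t) a) (Ioi 0) μ ∧
        a ^ p = ∫ t in Ioi 0, cfc (rpowIntegrand₀₁ p t) a ∂μ) ∧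
      (IntegrableOn (fun t ↦ cfc (rpowIntegrand₀₁ p t) b) (Ioi 0) μ ∧
        b ^ p = ∫ t in Ioi 0, cfc (rpowIntegrand₀₁ p t) b ∂μ) := by
  lift p to NNReal using hp.1.le
  have hp₀ : 0 < p := mod_cast hp.1
  obtain ⟨μ, hμ⟩ :=
    CFC.exists_measure_nnrpow_eq_integral_cfcₙ_rpowIntegrand₀₁ (𝒜 × ℬ) (p := p) (mod_cast hp)
  refine ⟨μ, fun a b ha hb ↦ ?_⟩
  obtain ⟨integrable, nnrpow_eq_integral⟩ := hμ (a, b) ⟨ha, hb⟩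
  have integrand : EqOn (fun t ↦ cfcₙ (rpowIntegrand₀₁ p t) (a, b))
      (fun t ↦ (cfc (rpowIntegrand₀₁ p t) a, cfc (rpowIntegrand₀₁ p t) b)) (Ioi 0) :=
    fun t ht ↦ cfcₙ_rpowIntegrand₀₁_prod hp ht ha hb
  replace integrable := integrable.congr_fun integrand measurableSet_Ioi
  have rpow_eq_integral : (a ^ (p : ℝ), b ^ (p : ℝ)) =
      ∫ t in Ioi 0, (cfc (rpowIntegrand₀₁ p t) a, cfc (rpowIntegrand₀₁ p t) b) ∂μ := by
    rw [← setIntegral_congr_fun measurableSet_Ioi integrand, ← nnrpow_eq_integral,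
      ← CFC.nnrpow_eq_rpow hp₀, ← CFC.nnrpow_eq_rpow hp₀]
    exact (CFC.nnrpow_map_prod ha hb).symm
  exact ⟨⟨integrable.fst, (congr_arg Prod.fst rpow_eq_integral).trans (fst_integral integrable)⟩,
    ⟨integrable.snd, (congr_arg Prod.snd rpow_eq_integral).trans (snd_integral integrable)⟩⟩

open Set MeasureTheory Real in
lemma map_rpow_le_rpow_map (Φ : 𝒜 →ₚ[ℂ] ℬ) (hΦ : Φ 1 = 1) {p : ℝ} (hp : p ∈ Icc 0 1)
    {a : 𝒜} (ha : 0 ≤ a) : Φ (a ^ p) ≤ Φ a ^ p := by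
  have hΦa : 0 ≤ Φ a := Φ.map_nonneg ha
  rcases hp.1.eq_or_lt with rfl | hp₀
  · rw [CFC.rpow_zero a, CFC.rpow_zero (Φ a), hΦ]
  rcases hp.2.eq_or_lt with rfl | hp₁
  · rw [CFC.rpow_one a, CFC.rpow_one (Φ a)]
  obtain ⟨μ, hμ⟩ := exists_measure_rpow_eq_integral_cfc_rpowIntegrand₀₁ 𝒜 ℬ ⟨hp₀, hp₁⟩
  obtain ⟨⟨integrable, rpow_eq⟩, integrable_map, rpow_map_eq⟩ := hμ a (Φ a) ha hΦa
  let Φ' : 𝒜 →L[ℝ] ℬ := ⟨Φ.toLinearMap.restrictScalars ℝ, map_continuous Φ⟩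
  calc Φ (a ^ p) = ∫ t in Ioi 0, Φ (cfc (rpowIntegrand₀₁ p t) a) ∂μ := by
        rw [rpow_eq]; exact (Φ'.integral_comp_comm integrable).symm
    _ ≤ ∫ t in Ioi 0, cfc (rpowIntegrand₀₁ p t) (Φ a) ∂μ :=
        setIntegral_mono_on (Φ'.integrable_comp integrable) integrable_map measurableSet_Ioi
          fun t ht ↦ map_cfc_rpowIntegrand₀₁_le Φ hΦ hp₁.ne ht ha
    _ = Φ a ^ p := rpow_map_eq.symm

/-- The `β`-weighted geometric mean `a #_β b = √a (a⁻¹ᐟ² b a⁻¹ᐟ²) ^ β √a` in a C⋆-algebra, meant for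
strictly positive `a`: otherwise `a⁻¹ʳ` or `CFC.sqrt a` may take the junk value `0`. -/
noncomputable def weightedGeometricMean (β : ℝ) (a b : 𝒜) : 𝒜 :=
  CFC.conjSqrt a (CFC.conjSqrt a⁻¹ʳ b ^ β)

theorem positive_map_gmean_subadditive_general (Φ : 𝒜 →ₚ[ℂ] ℬ) {β : ℝ} (hβ : β ∈ Set.Icc 0 1)
    {a b : 𝒜} (ha : IsStrictlyPositive a) (hb : 0 ≤ b) (hΦa : IsStrictlyPositive (Φ a)) :
    Φ (weightedGeometricMean β a b) ≤ weightedGeometricMean β (Φ a) (Φ b) := by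
  let Ψ : 𝒜 →ₚ[ℂ] ℬ := (conjSqrtPositiveMap (Φ a)⁻¹ʳ).comp (Φ.comp (conjSqrtPositiveMap a))
  have Ψ_apply (x : 𝒜) : Ψ x = CFC.conjSqrt (Φ a)⁻¹ʳ (Φ (CFC.conjSqrt a x)) := rfl
  have Ψ_one : Ψ 1 = 1 := by
    rw [Ψ_apply, CFC.conjSqrt_one a, CFC.conjSqrt_ringInverse_self (Φ a)]
  have h := map_rpow_le_rpow_map Ψ Ψ_one hβ ((conjSqrtPositiveMap a⁻¹ʳ).map_nonneg hb)
  change Ψ (CFC.conjSqrt a⁻¹ʳ b ^ β) ≤ Ψ (CFC.conjSqrt a⁻¹ʳ b) ^ β at h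
  rw [Ψ_apply, Ψ_apply, CFC.conjSqrt_conjSqrt_ringInverse a] at h
  calc Φ (weightedGeometricMean β a b) =
        CFC.conjSqrt (Φ a) (CFC.conjSqrt (Φ a)⁻¹ʳ (Φ (weightedGeometricMean β a b))) :=
        (CFC.conjSqrt_conjSqrt_ringInverse (Φ a) _).symm
    _ ≤ weightedGeometricMean β (Φ a) (Φ b) := CFC.conjSqrt_le_conjSqrt h

end CStarAlgebra

section Matrix
open scoped Ring MatrixOrder Matrix.Norms.L2Operator

variable {n : Type*} [Fintype n] [DecidableEq n]

lemma rpowH_eq_rpow {A : Matrix n n ℂ} (hA : 0 ≤ A) (r : ℝ) : A.rpowH r = A ^ r := by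
  have hermitian : A.IsHermitian := IsSelfAdjoint.of_nonneg hA
  rw [CFC.rpow_eq_cfc_real, hermitian.cfc_eq, Matrix.IsHermitian.cfc,
    Unitary.conjStarAlgAut_apply, Matrix.rpowH, dif_pos hermitian]
  rfl

lemma rpowH_one_half {A : Matrix n n ℂ} (hA : 0 ≤ A) : A.rpowH (1 / 2) = CFC.sqrt A := by
  rw [rpowH_eq_rpow hA, CFC.sqrt_eq_rpow]

lemma rpowH_neg_one_half {A : Matrix n n ℂ} (hA : IsStrictlyPositive A) :
    A.rpowH (-(1 / 2)) = CFC.sqrt A⁻¹ʳ := by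
  rw [rpowH_eq_rpow hA.nonneg, CFC.inverse_eq_rpow_neg_one,
    CFC.sqrt_rpow hA.isUnit (by norm_num), neg_div]

lemma gmean_eq_weightedGeometricMean (β : ℝ) {S A : Matrix n n ℂ} (hS : IsStrictlyPositive S)
    (hA : 0 ≤ A) : Matrix.gmean β S A = weightedGeometricMean β S A := by
  have conj_nonneg := (conjSqrtPositiveMap S⁻¹ʳ).map_nonneg hA
  rw [Matrix.gmean, rpowH_one_half hS.nonneg, rpowH_neg_one_half hS]
  exact congr_arg (CFC.conjSqrt S) (rpowH_eq_rpow conj_nonneg β)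

end Matrix

/-- positive linear maps are subadditive w.r.t. the β-weighted
matrix geometric mean: Φ(A #_β B) ≤ Φ(A) #_β Φ(B) in the Loewner order. -/
theorem positive_map_gmean_subadditive
    {n m : Type*} [Fintype n] [DecidableEq n] [Fintype m] [DecidableEq m]
    (β : ℝ) (hβ0 : 0 < β) (hβ1 : β < 1)
    (A B : Matrix n n ℂ) (hA : A.PosDef) (hB : B.PosSemidef)
    (Φ : Matrix n n ℂ →ₗ[ℂ] Matrix m m ℂ)
    (hΦ : ∀ C : Matrix n n ℂ, C.PosSemidef → (Φ C).PosSemidef)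
    (hΦA : (Φ A).PosDef) :
    (Matrix.gmean β (Φ A) (Φ B) - Φ (Matrix.gmean β A B)).PosSemidef := by
  open scoped MatrixOrder Matrix.Norms.L2Operator in
  rw [gmean_eq_weightedGeometricMean β hA.isStrictlyPositive hB.nonneg,
    gmean_eq_weightedGeometricMean β hΦA.isStrictlyPositive (hΦ B hB).nonneg]
  exact Matrix.le_iff.1 <| positive_map_gmean_subadditive_general
    (.mk₀ Φ fun C hC ↦ (hΦ C hC.posSemidef).nonneg) ⟨hβ0.le, hβ1.le⟩
    hA.isStrictlyPositive hB.nonneg hΦA.isStrictlyPositive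
end

section
/- Let α ∈ (1,∞), let ρ be a nonzero positive semidefinite complex matrix and σ a positive definite complex matrix of the same size. Then D^M_α(ρ‖σ) ≤ D^#_α(ρ‖σ) ≤ D^M_α(ρ‖σ) + (α/(α−1)) · log₂ |spec(σ)|, where |spec(σ)| is the number of distinct eigenvalues of σ. -/
open Matrix Filter
open scoped Kronecker Classical ComplexOrder

/-- Measured Rényi divergence of order α: supremum over orthonormal bases. -/
noncomputable def DMeas {n : Type*} [Fintype n] [DecidableEq n]
    (α : ℝ) (ρ σ : Matrix n n ℂ) : ℝ :=
  sSup { t : ℝ | ∃ v : n → n → ℂ,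
    (∀ i j, star (v i) ⬝ᵥ v j = if i = j then 1 else 0) ∧
    t = 1/(α-1) * Real.logb 2
      (∑ x, ((star (v x) ⬝ᵥ ρ *ᵥ v x).re) ^ α * ((star (v x) ⬝ᵥ σ *ᵥ v x).re) ^ (1-α)) }

/-!
For the lower bound, Hölder's inequality for the spectral measure of `σ^(-1/2) A σ^(-1/2)` gives
`⟨v, (σ #_β A) v⟩ ≤ ⟨v, σ v⟩^(1-β) ⟨v, A v⟩^β`. If `ρ ≤ σ #_{1/α} A`, then
`⟨v, ρ v⟩^α ⟨v, σ v⟩^(1-α) ≤ ⟨v, A v⟩` for every unit vector `v`, and summing over an orthonormal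
basis bounds the measured quantity by `tr A`.

For the upper bound, the pinching of `ρ` by the `N = |spec σ|` spectral projections of `σ` commutes
with `σ` and dominates `ρ / N`. In a joint eigenbasis it is the diagonal matrix of the
outcome distribution of `ρ`, and for diagonal matrices `N * p = s^(1-1/α) a^(1/α)` can be solved
for `a`. The resulting matrix is feasible with trace `N^α` times the classical Rényi quantity of
measuring in this basis.
-/

/-! ### Unitary diagonalizations -/

section UnitaryDiagonal

variable {n : Type*} [Fintype n] [DecidableEq n]

/-- The Hermitian matrix `U * diagonal a * star U` with eigenvalues `a` in the orthonormal basis of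
columns of `U`. As a star algebra homomorphism in `a`, it turns computations with matrices
diagonalized by the same `U` into computations with real functions. -/
noncomputable def unitaryDiagonal (U : unitaryGroup n ℂ) : (n → ℝ) →⋆ₐ[ℝ] Matrix n n ℂ where
  toFun a := U * diagonal (fun i => (a i : ℂ)) * star (U : Matrix n n ℂ)
  map_one' := by simp
  map_zero' := by simp
  map_mul' a b := by
    have hU : star (U : Matrix n n ℂ) * U = 1 := UnitaryGroup.star_mul_self U
    simp_rw [Pi.mul_apply, Complex.ofReal_mul, ← diagonal_mul_diagonal, Matrix.mul_assoc]
    rw [← Matrix.mul_assoc (star (U : Matrix n n ℂ)), hU, Matrix.one_mul]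
  map_add' a b := by
    simp_rw [Pi.add_apply, Complex.ofReal_add, ← diagonal_add, Matrix.mul_add, Matrix.add_mul]
  commutes' r := by
    have h : diagonal (fun i => ((algebraMap ℝ (n → ℝ) r i : ℝ) : ℂ))
        = algebraMap ℝ (Matrix n n ℂ) r := rfl
    rw [h, ← Algebra.commutes, Matrix.mul_assoc]
    simp
  map_star' a := by
    simp [star_mul, Matrix.mul_assoc, star_eq_conjTranspose (diagonal _), diagonal_conjTranspose,
      Pi.star_def]

lemma unitaryDiagonal_apply (U : unitaryGroup n ℂ) (a : n → ℝ) :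
    unitaryDiagonal U a = U * diagonal (fun i => (a i : ℂ)) * star (U : Matrix n n ℂ) := rfl

lemma unitaryDiagonal_mul (U : unitaryGroup n ℂ) (a : n → ℝ) :
    unitaryDiagonal U a * U = U * diagonal (fun i => (a i : ℂ)) := by
  rw [unitaryDiagonal_apply, Matrix.mul_assoc]
  simp

lemma star_mul_unitaryDiagonal (U : unitaryGroup n ℂ) (a : n → ℝ) :
    star (U : Matrix n n ℂ) * unitaryDiagonal U a
      = diagonal (fun i => (a i : ℂ)) * star (U : Matrix n n ℂ) := by
  rw [unitaryDiagonal_apply, ← Matrix.mul_assoc, ← Matrix.mul_assoc]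
  simp

lemma star_mul_unitaryDiagonal_mul (U : unitaryGroup n ℂ) (a : n → ℝ) :
    star (U : Matrix n n ℂ) * unitaryDiagonal U a * U = diagonal (fun i => (a i : ℂ)) := by
  rw [star_mul_unitaryDiagonal, Matrix.mul_assoc]
  simp

lemma isHermitian_unitaryDiagonal (U : unitaryGroup n ℂ) (a : n → ℝ) :
    (unitaryDiagonal U a).IsHermitian :=
  (IsSelfAdjoint.all a).map (unitaryDiagonal U)

lemma posSemidef_unitaryDiagonal (U : unitaryGroup n ℂ) {a : n → ℝ} (ha : ∀ i, 0 ≤ a i) :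
    (unitaryDiagonal U a).PosSemidef :=
  (PosSemidef.diagonal fun i => Complex.zero_le_real.mpr (ha i)).mul_mul_conjTranspose_same _

lemma spectrum_unitaryDiagonal (U : unitaryGroup n ℂ) (a : n → ℝ) :
    spectrum ℝ (unitaryDiagonal U a) = Set.range a := by
  rw [← spectrum.preimage_algebraMap ℂ, unitaryDiagonal_apply,
    Unitary.spectrum_star_right_conjugate, spectrum_diagonal]
  ext r
  simp

lemma cfc_unitaryDiagonal (U : unitaryGroup n ℂ) (a : n → ℝ) (f : ℝ → ℝ) :
    cfc f (unitaryDiagonal U a) = unitaryDiagonal U (f ∘ a) := by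
  obtain ⟨p, hp⟩ : ∃ p : Polynomial ℝ, ∀ i, p.eval (a i) = f (a i) :=
    ⟨Lagrange.interpolate (Finset.univ.image a) id f, fun i =>
      Lagrange.eval_interpolate_at_node f (v := id) Function.injective_id.injOn
        (Finset.mem_image_of_mem a (Finset.mem_univ i))⟩
  have heq : (spectrum ℝ (unitaryDiagonal U a)).EqOn f p.eval := fun x hx => by
    obtain ⟨i, rfl⟩ := (spectrum_unitaryDiagonal U a).subset hx
    exact (hp i).symm
  calc cfc f (unitaryDiagonal U a)
      = Polynomial.aeval (unitaryDiagonal U a) p := by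
        rw [cfc_congr heq, cfc_polynomial p _ (isHermitian_unitaryDiagonal U a).isSelfAdjoint]
    _ = unitaryDiagonal U (Polynomial.aeval a p) := Polynomial.aeval_algHom_apply _ _ _
    _ = unitaryDiagonal U (f ∘ a) := by
        congr 1
        ext i
        rw [Function.comp_apply, ← hp]
        simp

lemma eq_unitaryDiagonal_eigenvalues {A : Matrix n n ℂ} (hA : A.IsHermitian) :
    A = unitaryDiagonal hA.eigenvectorUnitary hA.eigenvalues :=
  hA.spectral_theorem

lemma eq_unitaryDiagonal_of_mulVec_col {A : Matrix n n ℂ} {U : unitaryGroup n ℂ} {a : n → ℝ}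
    (h : ∀ j, A *ᵥ (U : Matrix n n ℂ).col j = (a j : ℂ) • (U : Matrix n n ℂ).col j) :
    A = unitaryDiagonal U a := by
  have hAU : A * U = U * diagonal (fun i => (a i : ℂ)) := by
    ext i j
    rw [mul_diagonal, mul_comm]
    exact congrFun (h j) i
  rw [unitaryDiagonal_apply, ← hAU, Matrix.mul_assoc]
  simp

open Module Module.End in
lemma exists_orthonormalBasis_eigenvectors_of_commute {𝕜 E ι : Type*} [RCLike 𝕜]
    [NormedAddCommGroup E] [InnerProductSpace 𝕜 E] [FiniteDimensional 𝕜 E] [Fintype ι]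
    (hn : finrank 𝕜 E = Fintype.card ι) {S T : E →ₗ[𝕜] E} (hS : S.IsSymmetric)
    (hT : T.IsSymmetric) (hST : Commute S T) :
    ∃ (b : OrthonormalBasis ι 𝕜 E) (s t : ι → ℝ),
      ∀ i, S (b i) = (s i : 𝕜) • b i ∧ T (b i) = (t i : 𝕜) • b i := by
  let W : 𝕜 × 𝕜 → Submodule 𝕜 E := fun k => eigenspace S k.2 ⊓ eigenspace T k.1
  have hW : OrthogonalFamily 𝕜 (fun k => W k) fun k => (W k).subtypeₗᵢ :=
    hS.orthogonalFamily_eigenspace_inf_eigenspace hT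
  have hint : DirectSum.IsInternal fun k : {k // W k ≠ ⊥} => W k :=
    DirectSum.isInternal_ne_bot_iff.mpr (hS.directSum_isInternal_of_commute hT hST)
  have := hW.independent.fintypeNeBotOfFiniteDimensional
  have hW' := hW.comp (γ := {k // W k ≠ ⊥}) Subtype.val_injective
  let b := (hint.subordinateOrthonormalBasis hn hW').reindex (Fintype.equivFin ι).symm
  have hb (i : ι) : ∃ k, b i ∈ W k :=
    ⟨_, by simpa [b] using
      hint.subordinateOrthonormalBasis_subordinate hn (Fintype.equivFin ι i) hW'⟩
  choose k hk using hb
  have hreal {R : E →ₗ[𝕜] E} (hR : R.IsSymmetric) {μ : 𝕜} {i : ι} (h : b i ∈ eigenspace R μ) :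
      R (b i) = ((RCLike.re μ : ℝ) : 𝕜) • b i := by
    have hμ : HasEigenvalue R μ := hasEigenvalue_of_hasEigenvector ⟨h, b.toBasis.ne_zero i⟩
    rw [RCLike.conj_eq_iff_re.mp (hR.conj_eigenvalue_eq_self hμ), mem_eigenspace_iff.mp h]
  exact ⟨b, fun i => RCLike.re (k i).2, fun i => RCLike.re (k i).1,
    fun i => ⟨hreal hS (hk i).1, hreal hT (hk i).2⟩⟩

lemma exists_unitaryDiagonal_of_commute {A B : Matrix n n ℂ} (hA : A.IsHermitian)
    (hB : B.IsHermitian) (hAB : Commute A B) :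
    ∃ (U : unitaryGroup n ℂ) (a b : n → ℝ), A = unitaryDiagonal U a ∧ B = unitaryDiagonal U b := by
  have hcomm : Commute (toEuclideanLin A) (toEuclideanLin B) := by
    rw [toEuclideanLin_eq_toLin_orthonormal]
    exact hAB.map (toLinAlgEquiv (EuclideanSpace.basisFun n ℂ).toBasis)
  obtain ⟨b, s, t, hst⟩ := exists_orthonormalBasis_eigenvectors_of_commute finrank_euclideanSpace
    (isSymmetric_toEuclideanLin_iff.mpr hA) (isSymmetric_toEuclideanLin_iff.mpr hB) hcomm
  let U : unitaryGroup n ℂ :=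
    ⟨_, (EuclideanSpace.basisFun n ℂ).toMatrix_orthonormalBasis_mem_unitary b⟩
  refine ⟨U, s, t, eq_unitaryDiagonal_of_mulVec_col fun j => ?_,
    eq_unitaryDiagonal_of_mulVec_col fun j => ?_⟩
  · exact congrArg WithLp.ofLp (hst j).1
  · exact congrArg WithLp.ofLp (hst j).2

end UnitaryDiagonal

/-! ### Powers and geometric means -/

section Powers

variable {n m : Type*} [Fintype n] [DecidableEq n]

lemma rpowH_eq_cfc (A : Matrix n n ℂ) (r : ℝ) : A.rpowH r = cfc (fun x : ℝ => x ^ r) A := by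
  rw [rpowH]
  split_ifs with hA
  · rw [hA.cfc_eq]; rfl
  · exact (cfc_apply_of_not_predicate _ hA).symm

lemma isHermitian_rpowH (A : Matrix n n ℂ) (r : ℝ) : (A.rpowH r).IsHermitian := by
  rw [rpowH_eq_cfc]
  exact cfc_predicate _ A

lemma rpowH_zero {S : Matrix n n ℂ} (hS : S.IsHermitian) : S.rpowH 0 = 1 := by
  rw [rpowH_eq_cfc]
  simp [cfc_const_one ℝ S hS.isSelfAdjoint]

lemma rpowH_one {S : Matrix n n ℂ} (hS : S.IsHermitian) : S.rpowH 1 = S := by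
  rw [rpowH_eq_cfc]
  simp [cfc_id' ℝ S hS.isSelfAdjoint]

lemma rpowH_unitaryDiagonal (U : unitaryGroup n ℂ) (a : n → ℝ) (r : ℝ) :
    (unitaryDiagonal U a).rpowH r = unitaryDiagonal U (fun i => a i ^ r) := by
  rw [rpowH_eq_cfc, cfc_unitaryDiagonal]; rfl

lemma rpowH_mul_rpowH {S : Matrix n n ℂ} (hS : S.PosDef) (p q : ℝ) :
    S.rpowH p * S.rpowH q = S.rpowH (p + q) := by
  rw [eq_unitaryDiagonal_eigenvalues hS.1]
  simp only [rpowH_unitaryDiagonal, ← map_mul]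
  congr 1
  ext i
  exact (Real.rpow_add (hS.eigenvalues_pos i) p q).symm

lemma gmean_unitaryDiagonal (U : unitaryGroup n ℂ) {s a : n → ℝ} (hs : ∀ i, 0 < s i)
    (ha : ∀ i, 0 ≤ a i) (β : ℝ) :
    gmean β (unitaryDiagonal U s) (unitaryDiagonal U a)
      = unitaryDiagonal U (fun i => s i ^ (1 - β) * a i ^ β) := by
  simp only [gmean, rpowH_unitaryDiagonal, ← map_mul]
  congr 1
  ext i
  have hs' := hs i
  have hhalf : s i ^ (-(1 / 2) : ℝ) * a i * s i ^ (-(1 / 2) : ℝ) = s i ^ (-1 : ℝ) * a i := by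
    rw [mul_right_comm, ← Real.rpow_add hs']; norm_num
  calc s i ^ (1 / 2 : ℝ) * (s i ^ (-(1 / 2) : ℝ) * a i * s i ^ (-(1 / 2) : ℝ)) ^ β
        * s i ^ (1 / 2 : ℝ)
      = s i ^ (1 / 2 : ℝ) * s i ^ (-1 * β) * s i ^ (1 / 2 : ℝ) * a i ^ β := by
        rw [hhalf, Real.mul_rpow (by positivity) (ha i), ← Real.rpow_mul hs'.le]; ring
    _ = s i ^ (1 - β) * a i ^ β := by
        rw [← Real.rpow_add hs', ← Real.rpow_add hs']; ring_nf

lemma re_diag_conj_unitaryDiagonal (B : Matrix n m ℂ) (U : unitaryGroup n ℂ) (a : n → ℝ) (x : m) :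
    ((Bᴴ * unitaryDiagonal U a * B) x x).re
      = ∑ i, Complex.normSq ((star (U : Matrix n n ℂ) * B) i x) * a i := by
  set C := star (U : Matrix n n ℂ) * B
  have h : Bᴴ * unitaryDiagonal U a * B = Cᴴ * (diagonal (fun i => (a i : ℂ)) * C) := by
    simp [C, unitaryDiagonal_apply, conjTranspose_mul, star_eq_conjTranspose, Matrix.mul_assoc]
  rw [h, Matrix.mul_apply, Complex.re_sum]
  refine Finset.sum_congr rfl fun i _ => ?_
  simp only [conjTranspose_apply, RCLike.star_def, diagonal_mul, Complex.mul_re, Complex.mul_im,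
    Complex.conj_re, Complex.conj_im, Complex.ofReal_re, Complex.ofReal_im, Complex.normSq_apply]
  ring

lemma re_diag_conj_rpowH_le {X : Matrix n n ℂ} (hX : X.PosSemidef) {β : ℝ} (hβ : 0 < β)
    (hβ1 : β ≤ 1) (B : Matrix n m ℂ) (x : m) :
    ((Bᴴ * X.rpowH β * B) x x).re
      ≤ ((Bᴴ * B) x x).re ^ (1 - β) * ((Bᴴ * X * B) x x).re ^ β := by
  set U := hX.1.eigenvectorUnitary
  set a := hX.1.eigenvalues
  have hXU : X = unitaryDiagonal U a := eq_unitaryDiagonal_eigenvalues hX.1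
  have ha : ∀ i, 0 ≤ a i := hX.eigenvalues_nonneg
  have hone : Bᴴ * B = Bᴴ * unitaryDiagonal U 1 * B := by rw [map_one, Matrix.mul_one]
  rw [hone, hXU, rpowH_unitaryDiagonal]
  simp only [re_diag_conj_unitaryDiagonal, Pi.one_apply, mul_one]
  have holder := Real.inner_le_weight_mul_Lp_of_nonneg Finset.univ
    ((one_le_inv₀ hβ).mpr hβ1) (fun i => Complex.normSq ((star (U : Matrix n n ℂ) * B) i x))
    (fun i => a i ^ β) (fun i => Complex.normSq_nonneg _) (fun i => Real.rpow_nonneg (ha i) β)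
  simpa only [inv_inv, Real.rpow_rpow_inv (ha _) hβ.ne'] using holder

lemma re_diag_conj_gmean_le {S A : Matrix n n ℂ} (hS : S.PosDef) (hA : A.PosSemidef) {β : ℝ}
    (hβ : 0 < β) (hβ1 : β ≤ 1) (B : Matrix n m ℂ) (x : m) :
    ((Bᴴ * gmean β S A * B) x x).re
      ≤ ((Bᴴ * S * B) x x).re ^ (1 - β) * ((Bᴴ * A * B) x x).re ^ β := by
  have hP := isHermitian_rpowH S (1 / 2)
  have hN := isHermitian_rpowH S (-(1 / 2))
  have hPP : S.rpowH (1 / 2) * S.rpowH (1 / 2) = S := by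
    rw [rpowH_mul_rpowH hS, add_halves, rpowH_one hS.1]
  have hPN : S.rpowH (1 / 2) * S.rpowH (-(1 / 2)) = 1 := by
    rw [rpowH_mul_rpowH hS, add_neg_cancel, rpowH_zero hS.1]
  have hNP := mul_eq_one_comm.mp hPN
  have hX : (S.rpowH (-(1 / 2)) * A * S.rpowH (-(1 / 2))).PosSemidef := by
    simpa only [hN.eq] using hA.conjTranspose_mul_mul_same (S.rpowH (-(1 / 2)))
  have hCXC : Bᴴ * gmean β S A * B = (S.rpowH (1 / 2) * B)ᴴ *
      (S.rpowH (-(1 / 2)) * A * S.rpowH (-(1 / 2))).rpowH β * (S.rpowH (1 / 2) * B) := by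
    simp only [gmean, conjTranspose_mul, hP.eq, Matrix.mul_assoc]
  have hCC : (S.rpowH (1 / 2) * B)ᴴ * (S.rpowH (1 / 2) * B) = Bᴴ * S * B := by
    rw [conjTranspose_mul, hP.eq, Matrix.mul_assoc, ← Matrix.mul_assoc (S.rpowH (1 / 2)), hPP,
      Matrix.mul_assoc]
  have hNC : S.rpowH (-(1 / 2)) * (S.rpowH (1 / 2) * B) = B := by
    rw [← Matrix.mul_assoc, hNP, Matrix.one_mul]
  have hCAC : (S.rpowH (1 / 2) * B)ᴴ * (S.rpowH (-(1 / 2)) * A * S.rpowH (-(1 / 2))) *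
      (S.rpowH (1 / 2) * B) = Bᴴ * A * B := by
    have hNC' := congrArg conjTranspose hNC
    rw [conjTranspose_mul, hN.eq] at hNC'
    simp only [← Matrix.mul_assoc, hNC']
    simp only [Matrix.mul_assoc, hNC]
  simpa only [hCXC, hCC, hCAC] using re_diag_conj_rpowH_le hX hβ hβ1 (S.rpowH (1 / 2) * B) x

end Powers

/-! ### The pinching inequality -/

lemma posSemidef_card_smul_sum_sub {ι n m : Type*} [Fintype n] [Finite m] {M : Matrix n n ℂ}
    (hM : M.PosSemidef) (T : Finset ι) (E : ι → Matrix n m ℂ) :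
    (T.card • ∑ k ∈ T, (E k)ᴴ * M * E k
      - (∑ k ∈ T, E k)ᴴ * M * ∑ k ∈ T, E k).PosSemidef := by
  have hsum : ∑ k ∈ T, ∑ l ∈ T, (E k - E l)ᴴ * M * (E k - E l)
      = (2 : ℝ) • (T.card • ∑ k ∈ T, (E k)ᴴ * M * E k
          - (∑ k ∈ T, E k)ᴴ * M * ∑ k ∈ T, E k) := by
    simp only [conjTranspose_sub, conjTranspose_sum, Matrix.sub_mul, Matrix.mul_sub,
      Finset.sum_sub_distrib, Finset.sum_const, Matrix.sum_mul, Matrix.mul_sum, ← Finset.smul_sum,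
      two_smul]
    rw [Finset.sum_comm (f := fun k l => (E l)ᴴ * M * E k)]
    abel
  have hpos : (∑ k ∈ T, ∑ l ∈ T, (E k - E l)ᴴ * M * (E k - E l)).PosSemidef :=
    posSemidef_sum _ fun k _ => posSemidef_sum _ fun l _ => hM.conjTranspose_mul_mul_same _
  rw [hsum] at hpos
  simpa using hpos.smul (by norm_num : (0 : ℝ) ≤ 1 / 2)

section Pinching

variable {n : Type*} [Fintype n] [DecidableEq n]

/-- The orthogonal projection onto the eigenspace of a Hermitian matrix `A` for the real number `k`,
which is `0` if `k` is not an eigenvalue. If `A` is not Hermitian, this is the junk value `0` of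
`cfc`. -/
noncomputable def spectralProj (A : Matrix n n ℂ) (k : ℝ) : Matrix n n ℂ :=
  cfc (fun x : ℝ => if x = k then 1 else 0) A

lemma isHermitian_spectralProj (A : Matrix n n ℂ) (k : ℝ) : (spectralProj A k).IsHermitian :=
  cfc_predicate _ A

lemma spectralProj_unitaryDiagonal (U : unitaryGroup n ℂ) (a : n → ℝ) (k : ℝ) :
    spectralProj (unitaryDiagonal U a) k = unitaryDiagonal U (fun i => if a i = k then 1 else 0) :=
  cfc_unitaryDiagonal U a _

lemma mul_spectralProj {A : Matrix n n ℂ} (hA : A.IsHermitian) (k : ℝ) :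
    A * spectralProj A k = k • spectralProj A k := by
  rw [eq_unitaryDiagonal_eigenvalues hA, spectralProj_unitaryDiagonal, ← map_mul, ← map_smul]
  congr 1
  ext i
  simp +contextual

lemma spectralProj_mul {A : Matrix n n ℂ} (hA : A.IsHermitian) (k : ℝ) :
    spectralProj A k * A = k • spectralProj A k := by
  simpa [hA.eq, (isHermitian_spectralProj A k).eq] using
    congrArg conjTranspose (mul_spectralProj hA k)

lemma sum_spectralProj {A : Matrix n n ℂ} (hA : A.IsHermitian) {T : Finset ℝ}
    (hT : spectrum ℝ A ⊆ T) : ∑ k ∈ T, spectralProj A k = 1 := by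
  have h (i : n) : hA.eigenvalues i ∈ T := hT (hA.eigenvalues_mem_spectrum_real i)
  rw [eq_unitaryDiagonal_eigenvalues hA]
  simp only [spectralProj_unitaryDiagonal, ← map_sum]
  rw [← map_one (unitaryDiagonal hA.eigenvectorUnitary)]
  congr 1
  ext i
  simp [h i]

/-- The pinching `∑ P_k B P_k` of `B` by the spectral projections `P_k` of a Hermitian matrix `A`.
It commutes with `A` and has the same diagonal entries as `B` in every eigenbasis of `A`. -/
noncomputable def pinching (A B : Matrix n n ℂ) : Matrix n n ℂ :=
  ∑ k ∈ (finite_real_spectrum (A := A)).toFinset, spectralProj A k * B * spectralProj A k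

lemma isHermitian_pinching (A : Matrix n n ℂ) {B : Matrix n n ℂ} (hB : B.IsHermitian) :
    (pinching A B).IsHermitian := by
  refine isSelfAdjoint_sum _ fun k _ => ?_
  have h := isHermitian_conjTranspose_mul_mul (spectralProj A k) hB
  rwa [(isHermitian_spectralProj A k).eq] at h

lemma commute_pinching {A : Matrix n n ℂ} (hA : A.IsHermitian) (B : Matrix n n ℂ) :
    Commute A (pinching A B) := by
  refine Commute.sum_right _ _ _ fun k _ => ?_
  rw [commute_iff_eq, ← Matrix.mul_assoc, ← Matrix.mul_assoc, mul_spectralProj hA,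
    Matrix.mul_assoc _ _ A, spectralProj_mul hA]
  simp

lemma posSemidef_ncard_spectrum_smul_pinching_sub {A M : Matrix n n ℂ} (hA : A.IsHermitian)
    (hM : M.PosSemidef) :
    ((spectrum ℝ A).ncard • pinching A M - M).PosSemidef := by
  have h := posSemidef_card_smul_sum_sub hM (finite_real_spectrum (A := A)).toFinset
    (spectralProj A)
  rw [sum_spectralProj hA (Set.Finite.coe_toFinset _).superset] at h
  rw [Set.ncard_eq_toFinset_card _ finite_real_spectrum, pinching]
  simpa only [(isHermitian_spectralProj A _).eq, conjTranspose_one, Matrix.one_mul,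
    Matrix.mul_one] using h

lemma diag_conj_pinching (U : unitaryGroup n ℂ) (a : n → ℝ) (M : Matrix n n ℂ) (x : n) :
    (star (U : Matrix n n ℂ) * pinching (unitaryDiagonal U a) M * U) x x
      = (star (U : Matrix n n ℂ) * M * U) x x := by
  have hx : a x ∈ (finite_real_spectrum (A := unitaryDiagonal U a)).toFinset := by
    simp [spectrum_unitaryDiagonal]
  have hterm (k : ℝ) : (star (U : Matrix n n ℂ) * (spectralProj (unitaryDiagonal U a) k * M *
      spectralProj (unitaryDiagonal U a) k) * U) x x
      = if a x = k then (star (U : Matrix n n ℂ) * M * U) x x else 0 := by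
    rw [spectralProj_unitaryDiagonal]
    set d : n → ℝ := fun i => if a i = k then 1 else 0
    have h : star (U : Matrix n n ℂ) * (unitaryDiagonal U d * M * unitaryDiagonal U d) * U
        = diagonal (fun i => (d i : ℂ)) * (star (U : Matrix n n ℂ) * M * U) *
          diagonal (fun i => (d i : ℂ)) := by
      simp only [← Matrix.mul_assoc, star_mul_unitaryDiagonal]
      simp only [Matrix.mul_assoc, unitaryDiagonal_mul]
    rw [h, mul_diagonal, diagonal_mul]
    by_cases hk : a x = k <;> simp [d, hk]
  simp [pinching, Matrix.mul_sum, Matrix.sum_mul, Matrix.sum_apply, hterm, hx]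

end Pinching

/-! ### Measurements in an orthonormal basis -/

lemma rpow_mul_rpow_le_of_le {α r s a : ℝ} (hα : 0 < α) (hr : 0 ≤ r) (hs : 0 < s) (ha : 0 ≤ a)
    (h : r ≤ s ^ (1 - 1 / α) * a ^ (1 / α)) : r ^ α * s ^ (1 - α) ≤ a := by
  calc r ^ α * s ^ (1 - α) ≤ (s ^ (1 - 1 / α) * a ^ (1 / α)) ^ α * s ^ (1 - α) := by gcongr
    _ = s ^ ((1 - 1 / α) * α + (1 - α)) * a ^ (1 / α * α) := by
        rw [Real.mul_rpow (by positivity) (by positivity), ← Real.rpow_mul hs.le,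
          ← Real.rpow_mul ha, Real.rpow_add hs]
        ring
    _ = a := by
        have hexp : (1 - 1 / α) * α + (1 - α) = 0 := by field_simp; ring
        rw [hexp, one_div_mul_cancel hα.ne', Real.rpow_zero, Real.rpow_one, one_mul]

lemma rpow_mul_rpow_cancel {α r s : ℝ} (hα : 0 < α) (hr : 0 ≤ r) (hs : 0 < s) :
    s ^ (1 - 1 / α) * (r ^ α * s ^ (1 - α)) ^ (1 / α) = r := by
  have hexp : 1 - 1 / α + (1 - α) * (1 / α) = 0 := by field_simp; ring
  rw [Real.mul_rpow (by positivity) (by positivity), ← Real.rpow_mul hr, mul_one_div_cancel hα.ne',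
    Real.rpow_one, ← Real.rpow_mul hs.le, mul_left_comm, ← Real.rpow_add hs, hexp, Real.rpow_zero,
    mul_one]

lemma re_diag_conj_nonneg {n m : Type*} [Fintype n] [Finite m] {M : Matrix n n ℂ}
    (hM : M.PosSemidef) (B : Matrix n m ℂ) (x : m) : 0 ≤ ((Bᴴ * M * B) x x).re :=
  (Complex.nonneg_iff.mp (hM.conjTranspose_mul_mul_same B).diag_nonneg).1

section Measured

variable {n : Type*} [Fintype n] [DecidableEq n]

lemma re_diag_conj_pos {M : Matrix n n ℂ} (hM : M.PosDef) (U : unitaryGroup n ℂ) (x : n) :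
    0 < ((star (U : Matrix n n ℂ) * M * U) x x).re := by
  have hU : Function.Injective (U : Matrix n n ℂ).mulVec :=
    mulVec_injective_of_isUnit (Unitary.toUnits U).isUnit
  exact (Complex.pos_iff.mp (hM.conjTranspose_mul_mul_same hU).diag_pos).1

lemma sum_re_diag_conj_unitary (U : unitaryGroup n ℂ) (M : Matrix n n ℂ) :
    ∑ x, ((star (U : Matrix n n ℂ) * M * U) x x).re = M.trace.re := by
  have htrace : (star (U : Matrix n n ℂ) * M * U).trace = M.trace := by
    rw [trace_mul_cycle]
    simp
  rw [← htrace, trace, Complex.re_sum]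
  rfl

lemma trace_re_unitaryDiagonal (U : unitaryGroup n ℂ) (a : n → ℝ) :
    (unitaryDiagonal U a).trace.re = ∑ i, a i := by
  simp only [← sum_re_diag_conj_unitary U, star_mul_unitaryDiagonal_mul, diagonal_apply_eq,
    Complex.ofReal_re]

/-- The classical Rényi quantity `∑ p^α q^(1-α)` of the outcome distributions `p` and `q` obtained
by measuring `ρ` and `σ` in the orthonormal basis of columns of `U`. -/
noncomputable def measuredQ (α : ℝ) (ρ σ : Matrix n n ℂ) (U : unitaryGroup n ℂ) : ℝ :=
  ∑ x, ((star (U : Matrix n n ℂ) * ρ * U) x x).re ^ α *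
    ((star (U : Matrix n n ℂ) * σ * U) x x).re ^ (1 - α)

lemma measuredQ_pos (α : ℝ) {ρ σ : Matrix n n ℂ} (hρ : ρ.PosSemidef) (hρ0 : ρ ≠ 0)
    (hσ : σ.PosDef) (U : unitaryGroup n ℂ) : 0 < measuredQ α ρ σ U := by
  have htrace : 0 < ∑ x, ((star (U : Matrix n n ℂ) * ρ * U) x x).re := by
    have h : 0 < ρ.trace := hρ.trace_nonneg.lt_of_ne' fun h => hρ0 (hρ.trace_eq_zero_iff.mp h)
    rw [sum_re_diag_conj_unitary]
    exact (Complex.pos_iff.mp h).1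
  obtain ⟨x, -, hx⟩ :=
    (Finset.sum_pos_iff_of_nonneg fun x _ => re_diag_conj_nonneg hρ _ x).mp htrace
  have hσU := re_diag_conj_pos hσ U
  exact Finset.sum_pos' (fun y _ => mul_nonneg (Real.rpow_nonneg (re_diag_conj_nonneg hρ _ y) _)
    (Real.rpow_nonneg (hσU y).le _))
    ⟨x, Finset.mem_univ x, mul_pos (Real.rpow_pos_of_pos hx _) (Real.rpow_pos_of_pos (hσU x) _)⟩

lemma DMeas_eq_iSup_measuredQ (α : ℝ) (ρ σ : Matrix n n ℂ) :
    DMeas α ρ σ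
      = ⨆ U : unitaryGroup n ℂ, 1 / (α - 1) * Real.logb 2 (measuredQ α ρ σ U) := by
  have hdiag (V M : Matrix n n ℂ) (x : n) :
      star (V.col x) ⬝ᵥ M *ᵥ V.col x = (star V * M * V) x x := by
    rw [Matrix.mul_assoc]; rfl
  rw [DMeas, iSup]
  congr 1
  ext t
  constructor
  · rintro ⟨v, hv, rfl⟩
    have hU : (of v)ᵀ ∈ unitaryGroup n ℂ := mem_unitaryGroup_iff'.mpr <| by
      ext i j
      exact (hv i j).trans one_apply.symm
    exact ⟨⟨_, hU⟩, by simp only [measuredQ, ← hdiag]; rfl⟩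
  · rintro ⟨U, rfl⟩
    refine ⟨(U : Matrix n n ℂ).col, fun i j => ?_, by simp only [measuredQ, ← hdiag]⟩
    exact congrFun₂ (UnitaryGroup.star_mul_self U) i j |>.trans one_apply

lemma measuredQ_le_trace {α : ℝ} (hα : 1 ≤ α) {ρ σ A : Matrix n n ℂ} (hρ : ρ.PosSemidef)
    (hσ : σ.PosDef) (hA : A.PosSemidef) (hρA : (gmean (1 / α) σ A - ρ).PosSemidef)
    (U : unitaryGroup n ℂ) : measuredQ α ρ σ U ≤ A.trace.re := by
  have hα0 : 0 < α := zero_lt_one.trans_le hα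
  rw [← sum_re_diag_conj_unitary U A]
  refine Finset.sum_le_sum fun x _ => ?_
  refine rpow_mul_rpow_le_of_le hα0 (re_diag_conj_nonneg hρ _ x) (re_diag_conj_pos hσ U x)
    (re_diag_conj_nonneg hA _ x) ?_
  have hle := re_diag_conj_nonneg hρA (U : Matrix n n ℂ) x
  rw [Matrix.mul_sub, Matrix.sub_mul, Matrix.sub_apply, Complex.sub_re, sub_nonneg] at hle
  exact hle.trans (re_diag_conj_gmean_le hσ hA (by positivity) ((div_le_one hα0).mpr hα) _ x)

lemma exists_unitaryDiagonal_diag_ge {ρ σ : Matrix n n ℂ} (hρ : ρ.PosSemidef)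
    (hσ : σ.IsHermitian) :
    ∃ (U : unitaryGroup n ℂ) (s : n → ℝ), σ = unitaryDiagonal U s ∧
      (unitaryDiagonal U (fun x => (spectrum ℝ σ).ncard *
        ((star (U : Matrix n n ℂ) * ρ * U) x x).re) - ρ).PosSemidef := by
  obtain ⟨U, s, p, hs, hp⟩ := exists_unitaryDiagonal_of_commute hσ
    (isHermitian_pinching σ hρ.1) (commute_pinching hσ ρ)
  refine ⟨U, s, hs, ?_⟩
  have hdiag (x : n) : ((star (U : Matrix n n ℂ) * ρ * U) x x).re = p x := by
    rw [← diag_conj_pinching U s, ← hs, hp, star_mul_unitaryDiagonal_mul, diagonal_apply_eq,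
      Complex.ofReal_re]
  have hsmul : (fun x => (spectrum ℝ σ).ncard * p x) = (spectrum ℝ σ).ncard • p := by
    ext x
    simp
  simp only [hdiag, hsmul, map_nsmul, ← hp]
  exact posSemidef_ncard_spectrum_smul_pinching_sub hσ hρ

lemma exists_posSemidef_gmean_ge {α : ℝ} (hα : 0 < α) {ρ σ : Matrix n n ℂ}
    (hρ : ρ.PosSemidef) (hσ : σ.PosDef) :
    ∃ (U : unitaryGroup n ℂ) (A : Matrix n n ℂ), A.PosSemidef ∧
      (gmean (1 / α) σ A - ρ).PosSemidef ∧
      A.trace.re = (spectrum ℝ σ).ncard ^ α * measuredQ α ρ σ U := by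
  obtain ⟨U, s, hs, hge⟩ := exists_unitaryDiagonal_diag_ge hρ hσ.1
  set N : ℝ := ((spectrum ℝ σ).ncard : ℝ)
  set r : n → ℝ := fun x => ((star (U : Matrix n n ℂ) * ρ * U) x x).re
  have hr (x : n) : 0 ≤ r x := re_diag_conj_nonneg hρ _ x
  have hNr (x : n) : 0 ≤ N * r x := mul_nonneg (Nat.cast_nonneg _) (hr x)
  have hs_diag (x : n) : ((star (U : Matrix n n ℂ) * σ * U) x x).re = s x := by
    rw [hs, star_mul_unitaryDiagonal_mul, diagonal_apply_eq, Complex.ofReal_re]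
  have hs_pos (x : n) : 0 < s x := hs_diag x ▸ re_diag_conj_pos hσ U x
  let a : n → ℝ := fun x => (N * r x) ^ α * s x ^ (1 - α)
  have ha (x : n) : 0 ≤ a x :=
    mul_nonneg (Real.rpow_nonneg (hNr x) _) (Real.rpow_nonneg (hs_pos x).le _)
  have hgmean : gmean (1 / α) σ (unitaryDiagonal U a) = unitaryDiagonal U fun x => N * r x := by
    rw [hs, gmean_unitaryDiagonal U hs_pos ha]
    congr 1
    ext x
    exact rpow_mul_rpow_cancel hα (hNr x) (hs_pos x)
  refine ⟨U, unitaryDiagonal U a, posSemidef_unitaryDiagonal U ha, hgmean ▸ hge, ?_⟩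
  rw [trace_re_unitaryDiagonal, measuredQ, Finset.mul_sum]
  refine Finset.sum_congr rfl fun x _ => ?_
  rw [hs_diag, ← mul_assoc, ← Real.mul_rpow (Nat.cast_nonneg _) (hr x)]

lemma measuredQ_le_QSharp {α : ℝ} (hα : 1 ≤ α) {ρ σ : Matrix n n ℂ} (hρ : ρ.PosSemidef)
    (hσ : σ.PosDef) (U : unitaryGroup n ℂ) : measuredQ α ρ σ U ≤ QSharp α ρ σ := by
  obtain ⟨-, A, hA, hρA, -⟩ := exists_posSemidef_gmean_ge (zero_lt_one.trans_le hα) hρ hσ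
  refine le_csInf ⟨_, A, hA, hρA, rfl⟩ ?_
  rintro _ ⟨B, hB, hρB, rfl⟩
  exact measuredQ_le_trace hα hρ hσ hB hρB U

lemma exists_QSharp_le_mul_measuredQ {α : ℝ} (hα : 0 < α) {ρ σ : Matrix n n ℂ}
    (hρ : ρ.PosSemidef) (hσ : σ.PosDef) :
    ∃ U : unitaryGroup n ℂ,
      QSharp α ρ σ ≤ (spectrum ℝ σ).ncard ^ α * measuredQ α ρ σ U := by
  obtain ⟨U, A, hA, hρA, htrace⟩ := exists_posSemidef_gmean_ge hα hρ hσ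
  refine ⟨U, csInf_le ⟨0, ?_⟩ ⟨A, hA, hρA, htrace.symm⟩⟩
  rintro _ ⟨B, hB, -, rfl⟩
  exact (Complex.nonneg_iff.mp hB.trace_nonneg).1

lemma logb_measuredQ_le_DSharp {α : ℝ} (hα : 1 < α) {ρ σ : Matrix n n ℂ} (hρ : ρ.PosSemidef)
    (hρ0 : ρ ≠ 0) (hσ : σ.PosDef) (U : unitaryGroup n ℂ) :
    1 / (α - 1) * Real.logb 2 (measuredQ α ρ σ U) ≤ DSharp α ρ σ := by
  have hα' : 0 ≤ 1 / (α - 1) := one_div_nonneg.mpr (sub_nonneg.mpr hα.le)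
  exact mul_le_mul_of_nonneg_left (Real.logb_le_logb_of_le one_lt_two
    (measuredQ_pos α hρ hρ0 hσ U) (measuredQ_le_QSharp hα.le hρ hσ U)) hα'

lemma ncard_spectrum_real_eq_complex {A : Matrix n n ℂ} (hA : A.IsHermitian) :
    (spectrum ℝ A).ncard = (spectrum ℂ A).ncard := by
  rw [hA.spectrum_eq_image_range, ← hA.spectrum_real_eq_range_eigenvalues]
  exact (Set.ncard_image_of_injective _ Complex.ofReal_injective).symm

lemma exists_DSharp_le_logb_measuredQ_add {α : ℝ} (hα : 1 < α) {ρ σ : Matrix n n ℂ}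
    (hρ : ρ.PosSemidef) (hρ0 : ρ ≠ 0) (hσ : σ.PosDef) :
    ∃ U : unitaryGroup n ℂ, DSharp α ρ σ ≤ 1 / (α - 1) * Real.logb 2 (measuredQ α ρ σ U)
      + α / (α - 1) * Real.logb 2 (spectrum ℂ σ).ncard := by
  obtain ⟨U, hU⟩ := exists_QSharp_le_mul_measuredQ (zero_lt_one.trans hα) hρ hσ
  rw [ncard_spectrum_real_eq_complex hσ.1] at hU
  have hQ := measuredQ_pos α hρ hρ0 hσ U
  have hQSharp : 0 < QSharp α ρ σ := hQ.trans_le (measuredQ_le_QSharp hα.le hρ hσ U)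
  have hN : 0 < ((spectrum ℂ σ).ncard : ℝ) := by
    refine (Nat.cast_nonneg _).lt_of_ne' fun h => (hQSharp.trans_le hU).ne' ?_
    rw [h, Real.zero_rpow (zero_lt_one.trans hα).ne', zero_mul]
  have hlog : Real.logb 2 (QSharp α ρ σ)
      ≤ α * Real.logb 2 (spectrum ℂ σ).ncard + Real.logb 2 (measuredQ α ρ σ U) := by
    rw [← Real.logb_rpow_eq_mul_logb_of_pos hN,
      ← Real.logb_mul (Real.rpow_pos_of_pos hN α).ne' hQ.ne']
    exact Real.logb_le_logb_of_le one_lt_two hQSharp hU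
  have hα' : 0 ≤ 1 / (α - 1) := one_div_nonneg.mpr (sub_nonneg.mpr hα.le)
  refine ⟨U, (mul_le_mul_of_nonneg_left hlog hα').trans_eq ?_⟩
  ring

end Measured

/-- D^M_α ≤ D^#_α ≤ D^M_α + (α/(α−1))·log₂|spec(σ)|. -/
theorem DMeas_le_DSharp_le
    {n : Type*} [Fintype n] [DecidableEq n]
    (α : ℝ) (hα : 1 < α)
    (ρ σ : Matrix n n ℂ) (hρ : ρ.PosSemidef) (hρ0 : ρ ≠ 0) (hσ : σ.PosDef) :
    DMeas α ρ σ ≤ DSharp α ρ σ ∧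
    DSharp α ρ σ ≤ DMeas α ρ σ
      + α/(α-1) * Real.logb 2 ((spectrum ℂ σ).ncard : ℝ) := by
  have hle := logb_measuredQ_le_DSharp hα hρ hρ0 hσ
  obtain ⟨U, hU⟩ := exists_DSharp_le_logb_measuredQ_add hα hρ hρ0 hσ
  rw [DMeas_eq_iSup_measuredQ]
  exact ⟨ciSup_le hle, hU.trans (add_le_add_left (le_ciSup ⟨_, Set.forall_mem_range.mpr hle⟩ U) _)⟩
end
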